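/- Let G be a finite group and k a field of characteristic p > 0 dividing |G|, and let E_1,…,E_t be the elementary abelian p-subgroups of G furnished by the filtration theorem (there is a kG-module V and a filtration of k ⊕ V with subquotients induced from the E_i). Then the bounded derived category D^f(kG) of finitely generated kG-modules satisfies D^f(kG) = Thick_G(⊕_{i=1}^t k↑_{E_i}^G), the smallest thick subcategory containing the direct sum of the modules induced from the trivial modules of the E_i. -/

import Mathlib

set_option synthInstance.maxHeartbeats 400000
set_option maxHeartbeats 1000000

open CategoryTheory Limits

section DerivedThick

variable {A : Type*} [Category A] [Abelian A]

/-- Two cochain complexes are isomorphic in the derived category iff they are connected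
by a zig-zag of quasi-isomorphisms. -/
def DIso (K L : CochainComplex A ℤ) : Prop :=
  Relation.ReflTransGen
    (fun X Y => (∃ f : X ⟶ Y, QuasiIso f) ∨ (∃ g : Y ⟶ X, QuasiIso g)) K L

/-- A class of cochain complexes is *thick* if, regarded as a (strictly full) subcategory
of the derived category, it contains `0`, is closed under isomorphism in the derived
category, under shift, satisfies two-out-of-three for mapping cone triangles, and is
closed under direct summands. -/
def IsThickC (C : Set (CochainComplex A ℤ)) : Prop :=
  (∃ Z, Limits.IsZero Z ∧ Z ∈ C)
    ∧ (∀ K L : CochainComplex A ℤ, DIso K L → K ∈ C → L ∈ C)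
    ∧ (∀ K : CochainComplex A ℤ, K ∈ C → K⟦(1 : ℤ)⟧ ∈ C)
    ∧ (∀ K : CochainComplex A ℤ, K⟦(1 : ℤ)⟧ ∈ C → K ∈ C)
    ∧ (∀ (K L : CochainComplex A ℤ) (f : K ⟶ L), K ∈ C → L ∈ C →
        CochainComplex.mappingCone f ∈ C)
    ∧ (∀ (K L : CochainComplex A ℤ) (f : K ⟶ L), K ∈ C →
        CochainComplex.mappingCone f ∈ C → L ∈ C)
    ∧ (∀ (K L : CochainComplex A ℤ) (f : K ⟶ L), L ∈ C →
        CochainComplex.mappingCone f ∈ C → K ∈ C)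
    ∧ (∀ K L : CochainComplex A ℤ, (K ⊞ L) ∈ C → K ∈ C ∧ L ∈ C)

/-- The smallest thick subcategory of the derived category containing `N`. -/
def thickGenC (N : CochainComplex A ℤ) : Set (CochainComplex A ℤ) :=
  {M | ∀ C : Set (CochainComplex A ℤ), IsThickC C → N ∈ C → M ∈ C}

end DerivedThick

section RepComplexes

variable {k : Type} [Field k] {G : Type} [Group G]

/-- A complex of representations belongs to the bounded derived category `D^f(kG)` of
finitely generated `kG`-modules: it is bounded and has finite dimensional homology. -/
def IsDfRep (K : CochainComplex (Rep k G) ℤ) : Prop :=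
  (∀ i : ℤ, FiniteDimensional k (K.homology i).V)
    ∧ ∃ a b : ℤ, ∀ i : ℤ, (i < a ∨ b < i) → Subsingleton (K.homology i).V

end RepComplexes

variable {k : Type} [Field k] {G : Type} [Group G]

/-- A subgroup is elementary abelian for the prime `p` if it is commutative and every
element has order dividing `p`. -/
def IsElementaryAbelian (p : ℕ) (E : Subgroup G) : Prop :=
  (∀ x ∈ E, x ^ p = 1) ∧ ∀ x ∈ E, ∀ y ∈ E, x * y = y * x

/-- A representation `(Q, σ)` of `G` over `k` is induced from a representation of the
subgroup `E`, `Q ≅ W↑_E^G = kG ⊗_{kE} W`, if and only if it admits an `E`-stable subspace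
`W` such that `Q` is the (internal) direct sum of the translates `g • W`, one for each
left coset `g E` of `E` in `G` (imprimitivity). -/
def IsInducedFrom {Q : Type} [AddCommGroup Q] [Module k Q]
    (σ : Representation k G Q) (E : Subgroup G) : Prop :=
  ∃ W : Submodule k Q,
    (∀ e ∈ E, W.map (σ e) = W)
    ∧ iSupIndep (fun c : G ⧸ E => W.map (σ (Quotient.out c)))
    ∧ (⨆ c : G ⧸ E, W.map (σ (Quotient.out c))) = ⊤

/-- The representation of `G` on `k ⊕ V`, acting trivially on `k`. -/
noncomputable def trivProdRep {V : Type} [AddCommGroup V] [Module k V]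
    (ρ : Representation k G V) : Representation k G (k × V) where
  toFun g := (LinearMap.id : k →ₗ[k] k).prodMap (ρ g)
  map_one' := by
    apply LinearMap.ext
    intro x
    simp [Prod.ext_iff]
  map_mul' g h := by
    apply LinearMap.ext
    intro x
    simp [Prod.ext_iff]

noncomputable instance {k : Type} [Field k] {G : Type} [Group G] :
    CategoryTheory.Limits.HasFiniteBiproducts (Rep k G) :=
  CategoryTheory.Limits.HasFiniteBiproducts.of_hasFiniteProducts

/-- A representation `(Q, σ)` of `G` is induced from the trivial one-dimensional
representation `k` of the subgroup `E`, i.e. `Q ≅ k↑_E^G`: the imprimitivity criterion,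
where the distinguished `E`-stable line is fixed pointwise by `E`. -/
def IsInducedFromTrivial {k : Type} [Field k] {G : Type} [Group G]
    {Q : Type} [AddCommGroup Q] [Module k Q]
    (σ : Representation k G Q) (E : Subgroup G) : Prop :=
  ∃ W : Submodule k Q,
    Module.finrank k W = 1
    ∧ (∀ e ∈ E, ∀ w ∈ W, σ e w = w)
    ∧ iSupIndep (fun c : G ⧸ E => W.map (σ (Quotient.out c)))
    ∧ (⨆ c : G ⧸ E, W.map (σ (Quotient.out c))) = ⊤

/-! Truncations show that `D^f(kG)` is generated by the finite dimensional `kG`-modules placed in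
degree `0`. Such a module `X ≅ X ⊗ k` is a direct summand of `X ⊗ (k ⊕ V)`, which is filtered with
subquotients `X ⊗ (W_i)↑_{E_i}^G ≅ (X↓_{E_i} ⊗ W_i)↑_{E_i}^G`. As every nonzero finite dimensional
`kE_i`-module has a nonzero fixed vector, `X↓_{E_i} ⊗ W_i` is an iterated extension of trivial
modules `k`, and induction being exact, its induced module is an iterated extension of copies of
`k↑_{E_i}^G`. -/

section DerivedIso

variable {A : Type*} [Category A] [Abelian A] {K L : CochainComplex A ℤ}

namespace DIso

lemma of_quasiIso (f : K ⟶ L) [QuasiIso f] : DIso K L :=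
  .single (.inl ⟨f, inferInstance⟩)

lemma symm (h : DIso K L) : DIso L K := by
  induction h with
  | refl => exact .refl
  | tail _ hLM ih => exact .head hLM.symm ih

lemma nonempty_homology_iso (h : DIso K L) (i : ℤ) : Nonempty (K.homology i ≅ L.homology i) := by
  induction h with
  | refl => exact ⟨.refl _⟩
  | tail _ hLM ih =>
    obtain ⟨e⟩ := ih
    rcases hLM with ⟨f, _⟩ | ⟨f, _⟩
    · exact ⟨e ≪≫ isoOfQuasiIsoAt f i⟩
    · exact ⟨e ≪≫ (isoOfQuasiIsoAt f i).symm⟩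

end DIso

end DerivedIso

section Truncations

variable {A : Type*} [Category A] [Abelian A] (K : CochainComplex A ℤ)

/-- The isomorphism induced by `K.ιTruncLE n` on cohomology in degrees `≤ n`. -/
noncomputable def homologyTruncLEIso {n i : ℤ} (hi : i ≤ n) :
    (K.truncLE n).homology i ≅ K.homology i :=
  have := K.quasiIsoAt_ιTruncLE n i hi
  isoOfQuasiIsoAt (K.ιTruncLE n) i

/-- The isomorphism induced by `K.πTruncGE n` on cohomology in degrees `≥ n`. -/
noncomputable def homologyTruncGEIso {n i : ℤ} (hi : n ≤ i) :
    K.homology i ≅ (K.truncGE n).homology i :=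
  have := K.quasiIsoAt_πTruncGE n i hi
  isoOfQuasiIsoAt (K.πTruncGE n) i

lemma isGE_truncLE (a n : ℤ) [K.IsGE a] : (K.truncLE n).IsGE a := by
  rw [CochainComplex.isGE_iff]
  intro i hi
  rw [HomologicalComplex.exactAt_iff_isZero_homology]
  rcases le_or_gt i n with hin | hin
  · exact (K.isZero_of_isGE a i).of_iso (homologyTruncLEIso K hin)
  · exact CochainComplex.isZero_of_isLE _ n i

lemma isLE_truncGE (b n : ℤ) [K.IsLE b] : (K.truncGE n).IsLE b := by
  rw [CochainComplex.isLE_iff]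
  intro i hi
  rw [HomologicalComplex.exactAt_iff_isZero_homology]
  rcases le_or_gt n i with hni | hni
  · exact (K.isZero_of_isLE b i).of_iso (homologyTruncGEIso K hni).symm
  · exact CochainComplex.isZero_of_isGE _ n i

lemma exists_dIso_single (n : ℤ) [K.IsGE n] [K.IsLE n] :
    ∃ X : A, DIso K ((HomologicalComplex.single A (ComplexShape.up ℤ) n).obj X) := by
  have := isGE_truncLE K n n
  obtain ⟨X, ⟨e⟩⟩ := CochainComplex.exists_iso_single ((K.truncLE n).truncGE n) n
  let f := (K.truncLE n).πTruncGE n ≫ e.hom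
  exact ⟨X, (DIso.of_quasiIso (K.ιTruncLE n)).symm.trans (DIso.of_quasiIso f)⟩

end Truncations

section Devissage

variable {A : Type*} [Category A] [Abelian A]

/-- The objects of `A` which, regarded as complexes concentrated in degree `0`, belong to `C`. -/
def degreeZero (C : Set (CochainComplex A ℤ)) : ObjectProperty A :=
  fun X ↦ (HomologicalComplex.single A (ComplexShape.up ℤ) 0).obj X ∈ C

namespace IsThickC

variable {C : Set (CochainComplex A ℤ)} (hC : IsThickC C)
include hC

lemma mem_of_dIso {K L : CochainComplex A ℤ} (h : DIso K L) (hK : K ∈ C) : L ∈ C :=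
  hC.2.1 K L h hK

lemma mem_of_iso {K L : CochainComplex A ℤ} (e : K ≅ L) (hK : K ∈ C) : L ∈ C :=
  hC.mem_of_dIso (.of_quasiIso e.hom) hK

lemma mem_of_acyclic {K : CochainComplex A ℤ} (hK : K.Acyclic) : K ∈ C := by
  obtain ⟨Z, hZ, hZC⟩ := hC.1
  have hZ₀ : Z.Acyclic := fun i ↦
    ShortComplex.exact_of_isZero_X₂ _ ((HomologicalComplex.eval A _ i).map_isZero hZ)
  have : QuasiIso (0 : K ⟶ Z) :=
    (quasiIso_iff _).2 fun i ↦ (quasiIsoAt_iff_exactAt _ _ (hK i)).2 (hZ₀ i)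
  exact hC.mem_of_dIso (DIso.of_quasiIso (0 : K ⟶ Z)).symm hZC

lemma mem_shift_iff (K : CochainComplex A ℤ) (n : ℤ) : K⟦n⟧ ∈ C ↔ K ∈ C := by
  have mem_shift_add_one_iff (m : ℤ) : K⟦m + 1⟧ ∈ C ↔ K⟦m⟧ ∈ C :=
    let e := (shiftFunctorAdd (CochainComplex A ℤ) m 1).app K
    ⟨fun h ↦ hC.2.2.2.1 _ (hC.mem_of_iso e h), fun h ↦ hC.mem_of_iso e.symm (hC.2.2.1 _ h)⟩
  induction n using Int.induction_on with
  | zero =>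
    exact ⟨hC.mem_of_iso ((shiftFunctorZero _ ℤ).app K),
      hC.mem_of_iso ((shiftFunctorZero _ ℤ).app K).symm⟩
  | succ m ih => exact (mem_shift_add_one_iff m).trans ih
  | pred m ih => exact (mem_shift_add_one_iff _).symm.trans (by rwa [sub_add_cancel])

lemma mem_X₂_of_shortExact {S : ShortComplex (CochainComplex A ℤ)} (hS : S.ShortExact)
    (h₁ : S.X₁ ∈ C) (h₃ : S.X₃ ∈ C) : S.X₂ ∈ C :=
  have := CochainComplex.mappingCone.quasiIso_descShortComplex hS
  hC.2.2.2.2.2.1 _ _ S.f h₁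
    (hC.mem_of_dIso (DIso.of_quasiIso (CochainComplex.mappingCone.descShortComplex S)).symm h₃)

lemma mem_of_retract {K L : CochainComplex A ℤ} (r : Retract K L) (hL : L ∈ C) : K ∈ C := by
  have hS : (ShortComplex.mk r.i (cokernel.π r.i) (by simp)).ShortExact :=
    { exact := ShortComplex.exact_cokernel r.i
      mono_f := inferInstanceAs (Mono r.i)
      epi_g := inferInstanceAs (Epi (cokernel.π r.i)) }
  have s := ShortComplex.Splitting.ofExactOfRetraction _ hS.exact r.r r.retract hS.epi_g
  exact (hC.2.2.2.2.2.2.2 _ _ (hC.mem_of_iso s.isoBinaryBiproduct hL)).1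

lemma isStableUnderRetracts_degreeZero : (degreeZero C).IsStableUnderRetracts where
  of_retract r := hC.mem_of_retract (r.map (HomologicalComplex.single A (ComplexShape.up ℤ) 0))

lemma isClosedUnderExtensions_degreeZero : (degreeZero C).IsClosedUnderExtensions where
  prop_X₂_of_shortExact hS :=
    hC.mem_X₂_of_shortExact (hS.map_of_exact (HomologicalComplex.single A (ComplexShape.up ℤ) 0))

lemma containsZero_degreeZero : (degreeZero C).ContainsZero where
  exists_zero := ⟨_, isZero_zero A, hC.mem_of_acyclic fun i ↦
    ShortComplex.exact_of_isZero_X₂ _ <| (HomologicalComplex.eval A _ i).map_isZero <|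
      (HomologicalComplex.single A _ 0).map_isZero (isZero_zero A)⟩

lemma single_mem {X : A} (hX : degreeZero C X) (n : ℤ) :
    (HomologicalComplex.single A (ComplexShape.up ℤ) n).obj X ∈ C := by
  rw [← hC.mem_shift_iff _ n]
  exact hC.mem_of_iso
    (((CochainComplex.singleFunctors A).shiftIso n 0 n (by simp)).app X).symm hX

lemma mem_of_isGE_of_isLE {K : CochainComplex A ℤ} (n : ℤ) [K.IsGE n] [K.IsLE n]
    (h : degreeZero C (K.homology n)) : K ∈ C := by
  have := hC.isStableUnderRetracts_degreeZero
  obtain ⟨X, hKX⟩ := exists_dIso_single K n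
  obtain ⟨e⟩ := hKX.nonempty_homology_iso n
  have hX : degreeZero C X := (degreeZero C).prop_of_iso
    (e ≪≫ HomologicalComplex.singleObjHomologySelfIso (ComplexShape.up ℤ) n X) h
  exact hC.mem_of_dIso hKX.symm (hC.single_mem hX n)

lemma mem_of_truncLE_mem_of_truncGE_mem {K : CochainComplex A ℤ} (n₀ n₁ : ℤ) (hn : n₀ + 1 = n₁)
    (h₀ : K.truncLE n₀ ∈ C) (h₁ : K.truncGE n₁ ∈ C) : K ∈ C :=
  hC.mem_X₂_of_shortExact (K.shortComplexTruncLE_shortExact n₀) h₀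
    (hC.mem_of_dIso (DIso.of_quasiIso (K.shortComplexTruncLEX₃ToTruncGE n₀ n₁)).symm h₁)

lemma mem_of_homology_mem {K : CochainComplex A ℤ} (a b : ℤ) [K.IsGE a] [K.IsLE b]
    (h : ∀ i, degreeZero C (K.homology i)) : K ∈ C := by
  have := hC.isStableUnderRetracts_degreeZero
  have := hC.containsZero_degreeZero
  obtain ⟨n, hn⟩ : ∃ n : ℕ, b < a + n := ⟨(b + 1 - a).toNat, by lia⟩
  induction n generalizing K b with
  | zero =>
    refine hC.mem_of_acyclic fun i ↦ ?_
    rcases lt_or_ge i a with hi | hi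
    · exact K.exactAt_of_isGE a i
    · exact K.exactAt_of_isLE b i
  | succ n ih =>
    have := K.isLE_of_le b (a + n) (by lia)
    have := isGE_truncLE K a (a + n - 1)
    have := isLE_truncGE K (a + n) (a + n)
    refine hC.mem_of_truncLE_mem_of_truncGE_mem (a + n - 1) (a + n) (by lia) ?_ ?_
    · refine ih (K := K.truncLE (a + n - 1)) (a + n - 1) (fun i ↦ ?_) (by lia)
      rcases le_or_gt i (a + n - 1) with hi | hi
      · exact (degreeZero C).prop_of_iso (homologyTruncLEIso K hi).symm (h i)
      · exact (degreeZero C).prop_of_isZero (CochainComplex.isZero_of_isLE _ (a + n - 1) i)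
    · exact hC.mem_of_isGE_of_isLE (a + n)
        ((degreeZero C).prop_of_iso (homologyTruncGEIso K le_rfl) (h _))

end IsThickC

lemma IsThickC.mem_of_isDfRep {C : Set (CochainComplex (Rep k G) ℤ)} (hC : IsThickC C)
    (h : ∀ (X : Rep k G) [FiniteDimensional k X.V], degreeZero C X)
    {K : CochainComplex (Rep k G) ℤ} (hK : IsDfRep K) : K ∈ C := by
  obtain ⟨_, a, b, hab⟩ := hK
  have exactAt (i : ℤ) (hi : i < a ∨ b < i) : K.ExactAt i := by
    rw [HomologicalComplex.exactAt_iff_isZero_homology]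
    exact (Rep.isZero_iff k G _).2 (hab i hi)
  have : K.IsGE a := (K.isGE_iff a).2 fun i hi ↦ exactAt i (.inl hi)
  have : K.IsLE b := (K.isLE_iff b).2 fun i hi ↦ exactAt i (.inr hi)
  exact hC.mem_of_homology_mem a b fun i ↦ h (K.homology i)

end Devissage

section Translates

variable {k G X : Type*} [CommRing k] [Group G] [AddCommGroup X] [Module k X]
  {σ : Representation k G X} {E : Subgroup G} {W : Submodule k X}

lemma map_eq_map_of_mk_eq_mk (hW : ∀ e ∈ E, ∀ w ∈ W, σ e w ∈ W) {g h : G}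
    (hgh : (g : G ⧸ E) = h) : W.map (σ g) = W.map (σ h) := by
  suffices ∀ {g h : G}, (g : G ⧸ E) = h → W.map (σ g) ≤ W.map (σ h) from
    (this hgh).antisymm (this hgh.symm)
  rintro g h hgh _ ⟨w, hw, rfl⟩
  refine ⟨σ (h⁻¹ * g) w, hW _ (QuotientGroup.eq.1 hgh.symm) w hw, ?_⟩
  simp [← Module.End.mul_apply, ← map_mul]

lemma isCompl_iSup_map_of_notMem (hW : ∀ e ∈ E, ∀ w ∈ W, σ e w ∈ W)
    (hind : iSupIndep fun c : G ⧸ E ↦ W.map (σ c.out))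
    (htop : ⨆ c : G ⧸ E, W.map (σ c.out) = ⊤) :
    IsCompl W (⨆ g ∉ E, W.map (σ g)) := by
  have map_out (g : G) : W.map (σ (g : G ⧸ E).out) = W.map (σ g) :=
    map_eq_map_of_mk_eq_mk hW (QuotientGroup.out_eq' _)
  have map_one : W.map (σ (Quotient.out ((1 : G) : G ⧸ E))) = W := by
    rw [map_out, map_one, Module.End.one_eq_id, Submodule.map_id]
  have iSup_eq : ⨆ g ∉ E, W.map (σ g) = ⨆ c ≠ ((1 : G) : G ⧸ E), W.map (σ c.out) := by
    rw [← QuotientGroup.mk_surjective.iSup_comp]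
    simp only [map_out, ne_comm (b := ((1 : G) : G ⧸ E)), ne_eq, QuotientGroup.eq, inv_one,
      one_mul]
  have hcompl : IsCompl (W.map (σ (Quotient.out ((1 : G) : G ⧸ E))))
      (⨆ c ≠ ((1 : G) : G ⧸ E), W.map (σ c.out)) :=
    ⟨hind _, codisjoint_iff.2 <|
      (iSup_split_single (fun c : G ⧸ E ↦ W.map (σ c.out)) _).symm.trans htop⟩
  rwa [map_one, ← iSup_eq] at hcompl

lemma iSup_map_of_notMem_le_comap {e : G} (he : e ∈ E) :
    (⨆ g ∉ E, W.map (σ g)) ≤ (⨆ g ∉ E, W.map (σ g)).comap (σ e) := by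
  refine iSup₂_le fun g hg ↦ ?_
  rw [← Submodule.map_le_iff_le_comap, ← Submodule.map_comp, ← Module.End.mul_eq_comp, ← map_mul]
  exact le_iSup₂_of_le (e * g) (by rwa [E.mul_mem_cancel_left he]) le_rfl

lemma commute_projection (hW : ∀ e ∈ E, ∀ w ∈ W, σ e w ∈ W)
    (h : IsCompl W (⨆ g ∉ E, W.map (σ g))) {e : G} (he : e ∈ E) :
    Commute (W.projection _ h) (σ e) := by
  rw [LinearMap.IsIdempotentElem.commute_iff (Submodule.isIdempotentElem_projection h),
    Submodule.range_projection, Submodule.ker_projection]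
  exact ⟨hW e he, iSup_map_of_notMem_le_comap he⟩

end Translates

open scoped MonoidalCategory TensorProduct

section Imprimitivity

universe u

variable {k : Type u} [CommRing k] {G : Type u} [Group G]

/-- A representation `W` of `E` exhibited as a direct summand of the restriction of `Q`, in such a
way that `Q` is the internal direct sum of the translates of `W` by the cosets of `E`. The
independence of the translates is encoded by the projection `π`, which kills all the translates of
`W` by elements outside `E`. -/
structure Imprimitivity {E : Subgroup G} (W : Rep.{u} k E) (Q : Rep.{u} k G) where
  ι : W ⟶ Rep.res E.subtype Q
  π : Rep.res E.subtype Q ⟶ W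
  ι_π : ι ≫ π = 𝟙 W
  π_ρ_ι {g : G} (hg : g ∉ E) (w : W.V) : π.hom (Q.ρ g (ι.hom w)) = 0
  span_eq_top : Submodule.span k {x | ∃ (g : G) (w : W.V), Q.ρ g (ι.hom w) = x} = ⊤

namespace Imprimitivity

variable {E : Subgroup G} {W : Rep.{u} k E} {Q : Rep.{u} k G} (I : Imprimitivity W Q)

/-- The morphism `W↑_E^G ⟶ Q` which is adjoint to the inclusion of `W`. -/
noncomputable def indHom : Rep.ind E.subtype W ⟶ Q :=
  (Rep.indResHomEquiv E.subtype W Q).symm I.ι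

/-- The morphism from `Q` to the coinduced representation which is adjoint to the projection
onto `W`. -/
noncomputable def homCoind : Q ⟶ Rep.coind E.subtype W :=
  (Rep.resCoindHomEquiv E.subtype Q W) I.π

lemma indHom_mk (g : G) (w : W.V) :
    I.indHom.hom (Representation.IndV.mk E.subtype W.ρ g w) = Q.ρ g⁻¹ (I.ι.hom w) := by
  simp [indHom, Rep.indResHomEquiv]

lemma homCoind_apply (x : Q.V) (g : G) : (I.homCoind.hom x).1 g = I.π.hom (Q.ρ g x) := by
  simp [homCoind]

lemma π_ι (w : W.V) : I.π.hom (I.ι.hom w) = w :=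
  DFunLike.congr_fun (congrArg Rep.Hom.hom I.ι_π) w

lemma π_ρ_ι_of_mem (e : E) (w : W.V) : I.π.hom (Q.ρ e (I.ι.hom w)) = W.ρ e w := by
  rw [← I.π_ι (W.ρ e w), Rep.hom_comm_apply]
  rfl

open scoped Classical in
lemma indHom_homCoind [E.FiniteIndex] : I.indHom ≫ I.homCoind = (Rep.indCoindIso W).hom := by
  ext h w g
  change (I.homCoind.hom (I.indHom.hom (Representation.IndV.mk E.subtype W.ρ h w))).1 g =
    ((Rep.indToCoind W) (Representation.IndV.mk E.subtype W.ρ h w)).1 g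
  rw [homCoind_apply, indHom_mk, ← Module.End.mul_apply, ← map_mul]
  trans Rep.indToCoindAux W h w g
  · rcases em (g * h⁻¹ ∈ E) with hg | hg
    · rw [I.π_ρ_ι_of_mem ⟨_, hg⟩ w]
      simpa using (Rep.indToCoindAux_mul_snd h h w ⟨_, hg⟩).symm
    · rw [I.π_ρ_ι hg, Rep.indToCoindAux_of_not_rel]
      exact fun ⟨s, hs⟩ ↦ hg <| by simp [← hs, Subgroup.smul_def]
  · simp [Rep.indToCoind, LinearMap.codRestrict]

lemma indHom_surjective : Function.Surjective I.indHom.hom := by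
  have span_le_range : Submodule.span k {x | ∃ (g : G) (w : W.V), Q.ρ g (I.ι.hom w) = x} ≤
      LinearMap.range I.indHom.hom.toLinearMap := by
    rw [Submodule.span_le]
    rintro _ ⟨g, w, rfl⟩
    exact ⟨Representation.IndV.mk E.subtype W.ρ g⁻¹ w, by simpa using I.indHom_mk g⁻¹ w⟩
  exact fun x ↦ span_le_range (I.span_eq_top.ge Submodule.mem_top)

lemma isIso_indHom [E.FiniteIndex] : IsIso I.indHom := by
  classical
  have : Mono (I.indHom ≫ I.homCoind) := I.indHom_homCoind ▸ inferInstance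
  have := mono_of_mono I.indHom I.homCoind
  have := (Rep.epi_iff_surjective _).2 I.indHom_surjective
  exact isIso_of_mono_of_epi _

lemma tmul_mem_span (X : Rep.{u} k G) (x : X.V) (y : Q.V) :
    x ⊗ₜ[k] y ∈ Submodule.span k {z : X.V ⊗[k] Q.V | ∃ (g : G) (w : X.V ⊗[k] W.V),
      TensorProduct.map (X.ρ g) (Q.ρ g) (I.ι.hom.toLinearMap.lTensor X.V w) = z} := by
  have hy : y ∈ Submodule.span k _ := I.span_eq_top.ge Submodule.mem_top
  induction hy using Submodule.span_induction with
  | mem y hy =>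
    obtain ⟨g, w, rfl⟩ := hy
    exact Submodule.subset_span ⟨g, X.ρ g⁻¹ x ⊗ₜ w, by simp⟩
  | zero => simp
  | add y y' _ _ h h' => rw [TensorProduct.tmul_add]; exact add_mem h h'
  | smul a y _ h => rw [TensorProduct.tmul_smul]; exact Submodule.smul_mem _ a h

/-- Together with `isIso_indHom` this is the projection formula
`X ⊗ (W↑_E^G) ≅ (X↓_E ⊗ W)↑_E^G`. -/
noncomputable def tensorLeft (X : Rep.{u} k G) :
    Imprimitivity (Rep.res E.subtype X ⊗ W) (X ⊗ Q) where
  ι := (Rep.res E.subtype X ◁ I.ι :)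
  π := (Rep.res E.subtype X ◁ I.π :)
  ι_π := by
    rw [← MonoidalCategory.whiskerLeft_id, ← I.ι_π]
    exact (MonoidalCategory.whiskerLeft_comp _ _ _).symm
  π_ρ_ι {g} hg w := by
    induction w using TensorProduct.induction_on with
    | zero => simp
    | tmul x w =>
      change X.ρ g x ⊗ₜ I.π.hom (Q.ρ g (I.ι.hom w)) = (0 : X.V ⊗[k] W.V)
      rw [I.π_ρ_ι hg, TensorProduct.tmul_zero]
    | add w w' h h' => rw [map_add, map_add, map_add, h, h', add_zero]
  span_eq_top := by
    rw [← top_le_iff]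
    refine (TensorProduct.span_tmul_eq_top k X.V Q.V).ge.trans (Submodule.span_le.2 ?_)
    rintro _ ⟨x, y, rfl⟩
    exact I.tmul_mem_span X x y

/-- A subspace `W` of `Q`, stable under `E`, whose translates by representatives of `G ⧸ E` form
an internal direct sum decomposition of `Q`; the projection is along the sum of the translates of
`W` by the elements outside `E`. -/
noncomputable def ofSubmodule {Q : Rep.{u} k G} {W : Submodule k Q.V}
    (hW : ∀ e ∈ E, ∀ w ∈ W, Q.ρ e w ∈ W)
    (hind : iSupIndep fun c : G ⧸ E ↦ W.map (Q.ρ c.out))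
    (htop : ⨆ c : G ⧸ E, W.map (Q.ρ c.out) = ⊤) :
    Imprimitivity (Rep.subrepresentation (Rep.res E.subtype Q) W fun e ↦ hW e e.2) Q :=
  have hWU := isCompl_iSup_map_of_notMem hW hind htop
  { ι := Rep.subtype (Rep.res E.subtype Q) W fun e ↦ hW e e.2
    π := Rep.ofHom ⟨W.projectionOnto _ hWU, fun e ↦ LinearMap.ext fun x ↦ Subtype.ext <|
      DFunLike.congr_fun (commute_projection hW hWU e.2).eq x⟩
    ι_π := by
      ext w
      exact congrArg Subtype.val (W.projectionOnto_apply_left hWU w)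
    π_ρ_ι := fun {g} hg w ↦ W.projectionOnto_apply_of_mem_right hWU <|
      Submodule.mem_iSup_of_mem g <| Submodule.mem_iSup_of_mem hg <| Submodule.mem_map_of_mem w.2
    span_eq_top := by
      rw [← top_le_iff, ← htop]
      refine iSup_le fun c ↦ Submodule.map_le_iff_le_comap.2 fun w hw ↦ ?_
      exact Submodule.subset_span ⟨c.out, ⟨w, hw⟩, rfl⟩ }

end Imprimitivity

end Imprimitivity

section ShortExact

universe u

variable {k : Type u} [CommRing k] {G : Type u} [Group G]

lemma shortExact_rep_iff (S : ShortComplex (Rep.{u} k G)) :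
    S.ShortExact ↔ Function.Injective S.f.hom ∧ Function.Exact S.f.hom S.g.hom ∧
      Function.Surjective S.g.hom := by
  have exact_iff : S.Exact ↔ Function.Exact S.f.hom S.g.hom := by
    rw [← ShortComplex.exact_map_iff_of_faithful S (forget₂ (Rep k G) (ModuleCat k)),
      ShortComplex.ShortExact.moduleCat_exact_iff_function_exact]
    rfl
  rw [← exact_iff, ← Rep.mono_iff_injective, ← Rep.epi_iff_surjective]
  exact ⟨fun h ↦ ⟨h.mono_f, h.exact, h.epi_g⟩, fun ⟨_, h, _⟩ ↦ { exact := h }⟩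

lemma shortExact_map_tensorLeft (X : Rep.{u} k G) [Module.Flat k X.V]
    {S : ShortComplex (Rep.{u} k G)} (hS : S.ShortExact) :
    (S.map (MonoidalCategory.tensorLeft X)).ShortExact := by
  rw [shortExact_rep_iff] at hS ⊢
  obtain ⟨hf, hfg, hg⟩ := hS
  exact ⟨Module.Flat.lTensor_preserves_injective_linearMap S.f.hom.toLinearMap hf,
    lTensor_exact X.V (f := S.f.hom.toLinearMap) (g := S.g.hom.toLinearMap) hfg hg,
    LinearMap.lTensor_surjective X.V (g := S.g.hom.toLinearMap) hg⟩

variable (P : ObjectProperty (Rep.{u} k G))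

lemma isClosedUnderExtensions_inverseImage_tensorLeft [P.IsClosedUnderExtensions]
    (X : Rep.{u} k G) [Module.Flat k X.V] :
    (P.inverseImage (MonoidalCategory.tensorLeft X)).IsClosedUnderExtensions where
  prop_X₂_of_shortExact hS := P.prop_X₂_of_shortExact (shortExact_map_tensorLeft X hS)

lemma prop_of_subsingleton [P.ContainsZero] [P.IsClosedUnderIsomorphisms] (X : Rep.{u} k G)
    [Subsingleton X.V] : P X := P.prop_of_isZero ((Rep.isZero_iff k G X).2 inferInstance)

lemma prop_of_exact [P.IsClosedUnderExtensions] {X Y Z : Rep.{u} k G} (f : X ⟶ Y) (g : Y ⟶ Z)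
    (hf : Function.Injective f.hom) (hfg : Function.Exact f.hom g.hom)
    (hg : Function.Surjective g.hom) (hX : P X) (hZ : P Z) : P Y := by
  have zero : f ≫ g = 0 := by
    ext x
    exact hfg.apply_apply_eq_zero x
  exact P.prop_X₂_of_shortExact (S := .mk f g zero) ((shortExact_rep_iff _).2 ⟨hf, hfg, hg⟩) hX hZ

lemma isIso_subtype_of_eq_top (X : Rep.{u} k G) (M : Submodule k X.V)
    (hM : ∀ g, M ≤ M.comap (X.ρ g)) (htop : M = ⊤) : IsIso (X.subtype M hM) := by
  have := (Rep.mono_iff_injective (X.subtype M hM)).2 M.injective_subtype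
  have := (Rep.epi_iff_surjective (X.subtype M hM)).2 fun x ↦ ⟨⟨x, htop ▸ Submodule.mem_top⟩, rfl⟩
  exact isIso_of_mono_of_epi _

lemma prop_of_filtration [P.ContainsZero] [P.IsClosedUnderIsomorphisms]
    [P.IsClosedUnderExtensions] {X : Rep.{u} k G} {t : ℕ} (M : Fin (t + 1) → Submodule k X.V)
    (hinv : ∀ i g, M i ≤ (M i).comap (X.ρ g)) (hbot : M 0 = ⊥) (htop : M (Fin.last t) = ⊤)
    (hmono : ∀ i : Fin t, M i.castSucc ≤ M i.succ)
    (hsub : ∀ i : Fin t, ∃ (Q : Rep.{u} k G) (φ : X.subrepresentation (M i.succ) (hinv _) ⟶ Q),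
      Function.Surjective φ.hom ∧
      LinearMap.ker φ.hom.toLinearMap = (M i.castSucc).comap (M i.succ).subtype ∧ P Q) :
    P X := by
  have prop_M (i : Fin (t + 1)) : P (X.subrepresentation (M i) (hinv i)) := by
    induction i using Fin.induction with
    | zero =>
      have : Subsingleton (M 0) := by rw [hbot]; infer_instance
      exact prop_of_subsingleton P _
    | succ i ih =>
      obtain ⟨Q, φ, hφ, hker, hQ⟩ := hsub i
      let ι : X.subrepresentation (M i.castSucc) (hinv _) ⟶
          X.subrepresentation (M i.succ) (hinv _) :=
        Rep.ofHom ⟨Submodule.inclusion (hmono i), fun _ ↦ rfl⟩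
      have hιφ : Function.Exact ι.hom.toLinearMap φ.hom.toLinearMap :=
        LinearMap.exact_iff.2 (hker.trans (Submodule.range_inclusion _ _ (hmono i)).symm)
      exact prop_of_exact P ι φ (Submodule.inclusion_injective (hmono i)) hιφ hφ ih hQ
  have := isIso_subtype_of_eq_top X (M (Fin.last t)) (hinv _) htop
  exact P.prop_of_iso (asIso (X.subtype (M (Fin.last t)) (hinv _))) (prop_M _)

end ShortExact

section FixedVectors

universe u

variable {k : Type u} [Field k] {H : Type u} [Group H]

variable (k H) in
/-- Every nonzero finite dimensional representation of `H` over `k` has a nonzero fixed vector. -/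
def HasFixedVectors : Prop :=
  ∀ (W : Rep.{u} k H) [FiniteDimensional k W.V] [Nontrivial W.V],
    ∃ w : W.V, w ≠ 0 ∧ ∀ h, W.ρ h w = w

lemma hasFixedVectors_of_isPGroup [Finite H] {p : ℕ} [Fact p.Prime] [CharP k p]
    (hH : IsPGroup p H) : HasFixedVectors k H := by
  intro W _ _
  obtain ⟨x, hx⟩ := exists_ne (0 : W.V)
  let S := AddSubgroup.closure (Set.range fun h ↦ W.ρ h x)
  have hS (h : H) : S ≤ S.comap (W.ρ h : W.V →+ W.V) := by
    rw [AddSubgroup.closure_le]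
    rintro _ ⟨h', rfl⟩
    exact AddSubgroup.subset_closure ⟨h * h', by simp⟩
  have hp (y : S) : p • y = 0 := by
    ext
    rw [S.coe_nsmul, ← Nat.cast_smul_eq_nsmul k, CharP.cast_eq_zero, zero_smul, S.coe_zero]
  have : AddGroup.FG S := AddGroup.closure_finite_fg _
  have : Finite S := AddCommGroup.finite_of_fg_isAddTorsion S fun y ↦
    isOfFinAddOrder_iff_nsmul_eq_zero.2 ⟨p, Nat.Prime.pos Fact.out, hp y⟩
  let : MulAction H S :=
    { smul h s := ⟨W.ρ h s, hS h s.2⟩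
      one_smul s := Subtype.ext (DFunLike.congr_fun (map_one W.ρ) (s : W.V))
      mul_smul h h' s := Subtype.ext (DFunLike.congr_fun (map_mul W.ρ h h') (s : W.V)) }
  have hpS : p ∣ Nat.card S := by
    let x' : S := ⟨x, AddSubgroup.subset_closure ⟨1, by simp⟩⟩
    have := addOrderOf_eq_prime (hp x') fun h ↦ hx (congrArg Subtype.val h)
    exact this ▸ addOrderOf_dvd_natCard x'
  obtain ⟨y, hy, hy₀⟩ := hH.exists_fixed_point_of_prime_dvd_card_of_fixed_point S hpS (a := 0)
    (fun h ↦ Subtype.ext (map_zero (W.ρ h)))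
  exact ⟨y, fun h ↦ hy₀ (Subtype.ext h.symm), fun h ↦ congrArg Subtype.val (hy h)⟩

lemma nonempty_trivial_iso (W : Rep.{u} k H) (hW₁ : Module.finrank k W.V = 1)
    (hW : ∀ h w, W.ρ h w = w) : Nonempty (Rep.trivial k H k ≅ W) := by
  obtain ⟨f⟩ : Nonempty (k ≃ₗ[k] W.V) := Module.nonempty_linearEquiv_of_finrank_eq_one hW₁
  exact ⟨Rep.mkIso <| .mk f fun h ↦ LinearMap.ext fun a ↦ (hW h (f a)).symm⟩

lemma HasFixedVectors.prop_of_trivial (hH : HasFixedVectors k H) (P : ObjectProperty (Rep.{u} k H))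
    [P.ContainsZero] [P.IsClosedUnderIsomorphisms] [P.IsClosedUnderExtensions]
    (hP : P (Rep.trivial k H k)) (W : Rep.{u} k H) [FiniteDimensional k W.V] : P W := by
  induction hn : Module.finrank k W.V using Nat.strong_induction_on generalizing W with
  | h n ih =>
    cases subsingleton_or_nontrivial W.V with
    | inl _ => exact prop_of_subsingleton P W
    | inr _ =>
      obtain ⟨w, hw₀, hw⟩ := hH W
      let N := LinearMap.range (LinearMap.toSpanSingleton k W.V w)
      have hN (h : H) : N ≤ N.comap (W.ρ h) := by
        rintro _ ⟨a, rfl⟩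
        exact ⟨a, by simp [hw]⟩
      let f : Rep.trivial k H k ⟶ W :=
        Rep.ofHom ⟨LinearMap.toSpanSingleton k W.V w, fun h ↦ by ext; simp [hw]⟩
      have hf : Function.Exact f.hom (W.mkQ N hN).hom := LinearMap.exact_map_mkQ_range _
      refine prop_of_exact P f (W.mkQ N hN) (smul_left_injective k hw₀) hf N.mkQ_surjective hP
        (ih _ ?_ _ rfl)
      have : 0 < Module.finrank k N := by
        rw [LinearMap.finrank_range_of_inj (smul_left_injective k hw₀), Module.finrank_self]
        exact one_pos
      have := N.finrank_quotient_add_finrank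
      change Module.finrank k (W.V ⧸ N) < n
      lia

end FixedVectors

lemma IsElementaryAbelian.hasFixedVectors [Finite G] {p : ℕ} [Fact p.Prime] [CharP k p]
    {E : Subgroup G} (hE : IsElementaryAbelian p E) : HasFixedVectors k E :=
  hasFixedVectors_of_isPGroup (p := p) fun x ↦ ⟨1, Subtype.ext (by simpa using hE.1 x x.2)⟩

section InducedProperties

variable {E : Subgroup G}

lemma IsInducedFrom.exists_imprimitivity {Q : Rep k G} [FiniteDimensional k Q.V]
    (hQ : IsInducedFrom Q.ρ E) :
    ∃ W : Rep k E, FiniteDimensional k W.V ∧ Nonempty (Imprimitivity W Q) := by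
  obtain ⟨W, hW, hind, htop⟩ := hQ
  have mem_of_mem (e) (he : e ∈ E) (w) (hw : w ∈ W) : Q.ρ e w ∈ W :=
    (hW e he).le (Submodule.mem_map_of_mem hw)
  exact ⟨_, inferInstanceAs (FiniteDimensional k W), ⟨.ofSubmodule mem_of_mem hind htop⟩⟩

lemma IsInducedFromTrivial.finiteIndex {Q : Rep k G} [FiniteDimensional k Q.V]
    (hQ : IsInducedFromTrivial Q.ρ E) : E.FiniteIndex := by
  obtain ⟨W, hW₁, -, hind, -⟩ := hQ
  have ne_bot (c : G ⧸ E) : W.map (Q.ρ c.out) ≠ ⊥ := by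
    rw [← Submodule.map_bot (Q.ρ c.out),
      (Submodule.map_injective_of_injective (Q.ρ.apply_bijective _).injective).ne_iff]
    rintro rfl
    simp at hW₁
  have := WellFoundedGT.finite_of_iSupIndep hind ne_bot
  exact Subgroup.finiteIndex_of_finite_quotient

lemma IsInducedFromTrivial.nonempty_ind_trivial_iso {Q : Rep k G} [E.FiniteIndex]
    (hQ : IsInducedFromTrivial Q.ρ E) : Nonempty (Rep.ind E.subtype (Rep.trivial k E k) ≅ Q) := by
  obtain ⟨W, hW₁, hW, hind, htop⟩ := hQ
  have mem_of_mem (e) (he : e ∈ E) (w) (hw : w ∈ W) : Q.ρ e w ∈ W := by rwa [hW e he w hw]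
  obtain ⟨e⟩ := nonempty_trivial_iso (Rep.subrepresentation (Rep.res E.subtype Q) W
    fun e ↦ mem_of_mem e e.2) hW₁ fun e w ↦ Subtype.ext (hW e e.2 w w.2)
  have := (Imprimitivity.ofSubmodule mem_of_mem hind htop).isIso_indHom
  exact ⟨(Rep.indFunctor k E.subtype).mapIso e ≪≫
    asIso (Imprimitivity.ofSubmodule mem_of_mem hind htop).indHom⟩

/-- The inclusion and the projection which make `k` a direct summand of `k ⊕ V`. -/
noncomputable def retractTrivProdRep (V : Rep.{0} k G) :
    Retract (𝟙_ (Rep k G)) (Rep.of (trivProdRep V.ρ)) where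
  i := Rep.ofHom ⟨LinearMap.inl k k V.V, fun g ↦
    LinearMap.ext fun _ ↦ Prod.ext rfl (map_zero (V.ρ g)).symm⟩
  r := Rep.ofHom ⟨LinearMap.fst k k V.V, fun _ ↦ rfl⟩
  retract := by ext; simp

lemma prop_of_prop_tensor_trivProdRep (P : ObjectProperty (Rep.{0} k G)) [P.IsStableUnderRetracts]
    (V X : Rep k G) (h : P (X ⊗ Rep.of (trivProdRep V.ρ))) : P X :=
  P.prop_of_iso (ρ_ X)
    (P.prop_of_retract ((retractTrivProdRep V).map (MonoidalCategory.tensorLeft X)) h)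

variable (P : ObjectProperty (Rep.{0} k G)) [P.ContainsZero] [P.IsStableUnderRetracts]
  [P.IsClosedUnderExtensions]

lemma HasFixedVectors.prop_ind [E.FiniteIndex] (hE : HasFixedVectors k E)
    (hP : P (Rep.ind E.subtype (Rep.trivial k E k))) (W : Rep k E) [FiniteDimensional k W.V] :
    P (Rep.ind E.subtype W) :=
  hE.prop_of_trivial (P.inverseImage (Rep.indFunctor k E.subtype)) hP W

lemma HasFixedVectors.prop_tensor_of_isInducedFrom (hE : HasFixedVectors k E) {Q R : Rep k G}
    [FiniteDimensional k Q.V] [FiniteDimensional k R.V] (hQ : IsInducedFromTrivial Q.ρ E)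
    (hPQ : P Q) (hR : IsInducedFrom R.ρ E) (X : Rep k G) [FiniteDimensional k X.V] :
    P (X ⊗ R) := by
  have := hQ.finiteIndex
  obtain ⟨e⟩ := hQ.nonempty_ind_trivial_iso
  obtain ⟨W, _, ⟨I⟩⟩ := hR.exists_imprimitivity
  have := (I.tensorLeft X).isIso_indHom
  have : FiniteDimensional k (Rep.res E.subtype X ⊗ W).V :=
    inferInstanceAs (FiniteDimensional k (X.V ⊗[k] W.V))
  exact P.prop_of_iso (asIso (I.tensorLeft X).indHom) (hE.prop_ind P (P.prop_of_iso e.symm hPQ) _)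

end InducedProperties

theorem df_generated_by_induced_from_elementary_abelians_general
    (k : Type) [Field k] (G : Type) [Group G]
    (Vr : Rep k G) (t : ℕ) (E : Fin t → Subgroup G) (hE : ∀ i, HasFixedVectors k (E i))
    (M : Fin (t + 1) → Submodule k (k × Vr.V))
    (hinv : ∀ (i : Fin (t + 1)) (g : G) (x : k × Vr.V),
      x ∈ M i → trivProdRep Vr.ρ g x ∈ M i)
    (hbot : M 0 = ⊥) (htop : M (Fin.last t) = ⊤)
    (hmono : ∀ i : Fin t, M i.castSucc ≤ M i.succ)
    (hsub : ∀ i : Fin t,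
      ∃ (Qr : Rep k G) (_ : FiniteDimensional k Qr.V),
        IsInducedFrom Qr.ρ (E i) ∧
        ∃ φ : (M i.succ) →ₗ[k] Qr.V,
          Function.Surjective φ
          ∧ LinearMap.ker φ = (M i.castSucc).comap (M i.succ).subtype
          ∧ ∀ (g : G) (x : M i.succ),
              φ ⟨trivProdRep Vr.ρ g x.1, hinv i.succ g x.1 x.2⟩ = Qr.ρ g (φ x))
    (Q : Fin t → Rep k G) (hQfin : ∀ i, FiniteDimensional k (Q i).V)
    (hQ : ∀ i, IsInducedFromTrivial (Q i).ρ (E i))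
    (K : CochainComplex (Rep k G) ℤ) (hK : IsDfRep K) :
    K ∈ thickGenC ((HomologicalComplex.single (Rep k G) (ComplexShape.up ℤ) 0).obj (⨁ Q)) := by
  intro C hC hQC
  have := hC.containsZero_degreeZero
  have := hC.isStableUnderRetracts_degreeZero
  have := hC.isClosedUnderExtensions_degreeZero
  refine hC.mem_of_isDfRep (fun X _ ↦ ?_) hK
  have := isClosedUnderExtensions_inverseImage_tensorLeft (degreeZero C) X
  refine prop_of_prop_tensor_trivProdRep (degreeZero C) Vr X ?_
  refine prop_of_filtration ((degreeZero C).inverseImage (MonoidalCategory.tensorLeft X)) M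
    hinv hbot htop hmono fun i ↦ ?_
  obtain ⟨R, _, hR, φ, hφ, hker, hφρ⟩ := hsub i
  refine ⟨R, Rep.ofHom ⟨φ, fun g ↦ LinearMap.ext (hφρ g)⟩, hφ, hker, ?_⟩
  exact (hE i).prop_tensor_of_isInducedFrom _ (hQ i)
    (ObjectProperty.IsStableUnderRetracts.of_biproduct (degreeZero C) Q hQC i) hR X

/-- Let `G` be a finite group and `k` a field of characteristic `p > 0`
dividing `|G|`, and let `E_1, …, E_t` be the elementary abelian `p`-subgroups of `G`
furnished by the filtration theorem (there is a `kG`-module `V` and a filtration of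
`k ⊕ V` whose subquotients are induced from the `E_i`; the filtration and its properties
appear below as hypotheses).  Then the bounded derived category `D^f(kG)` of finitely
generated `kG`-modules satisfies `D^f(kG) = Thick_G(⊕_{i=1}^t k↑_{E_i}^G)`, the smallest
thick subcategory containing the direct sum of the modules induced from the trivial
modules of the `E_i`: every object of `D^f(kG)` lies in the thick subcategory generated
by any object `⊕_i Q_i` with `Q_i ≅ k↑_{E_i}^G`. -/
theorem df_generated_by_induced_from_elementary_abelians
    (k : Type) [Field k] (G : Type) [Group G] [Fintype G]
    (p : ℕ) [Fact p.Prime] [CharP k p] (hdvd : p ∣ Fintype.card G)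
    -- the data furnished by the filtration theorem:
    (Vr : Rep k G) (hV : FiniteDimensional k Vr.V) (t : ℕ)
    (E : Fin t → Subgroup G) (hE : ∀ i, IsElementaryAbelian p (E i))
    (M : Fin (t + 1) → Submodule k (k × Vr.V))
    (hinv : ∀ (i : Fin (t + 1)) (g : G) (x : k × Vr.V),
      x ∈ M i → trivProdRep Vr.ρ g x ∈ M i)
    (hbot : M 0 = ⊥) (htop : M (Fin.last t) = ⊤)
    (hmono : ∀ i : Fin t, M i.castSucc ≤ M i.succ)
    (hsub : ∀ i : Fin t,
      ∃ (Qr : Rep k G) (_ : FiniteDimensional k Qr.V),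
        IsInducedFrom Qr.ρ (E i) ∧
        ∃ φ : (M i.succ) →ₗ[k] Qr.V,
          Function.Surjective φ
          ∧ LinearMap.ker φ = (M i.castSucc).comap (M i.succ).subtype
          ∧ ∀ (g : G) (x : M i.succ),
              φ ⟨trivProdRep Vr.ρ g x.1, hinv i.succ g x.1 x.2⟩ = Qr.ρ g (φ x)) :
    -- the conclusion:
    ∀ (Q : Fin t → Rep k G), (∀ i, FiniteDimensional k (Q i).V) →
      (∀ i, IsInducedFromTrivial (Q i).ρ (E i)) →
      ∀ K : CochainComplex (Rep k G) ℤ, IsDfRep K →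
        K ∈ thickGenC
          ((HomologicalComplex.single (Rep k G) (ComplexShape.up ℤ) 0).obj (⨁ Q)) := by
  exact df_generated_by_induced_from_elementary_abelians_general k G Vr t E
    (fun i ↦ (hE i).hasFixedVectors) M hinv hbot htop hmono hsub
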